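/- arXiv:2406.17270 — 4 statements merged into one kernel-verified Lean document; each statement's English description precedes it below -/
import Mathlib

section
/- Let A be a ℤ₂-graded associative algebra over a field of characteristic zero. Then A and G(G(A)) satisfy the same ℤ₂-graded polynomial identities, and consequently the same ordinary polynomial identities: Id(A) = Id(G(G(A))). -/
/-! The field `F` is infinite, and the subalgebra `C` of `G ⊗ G` generated by `G⁰ ⊗ G⁰` and `G¹ ⊗ G¹`
is commutative, because the two signs of a swap of odd elements cancel. Reassociating,
`G(G(A))` lies in `A ⊗ C`, with components inside `A⁰ ⊗ C` and `A¹ ⊗ C`. This replaces the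
involution `f ↦ f*` and works without reduction to multilinear polynomials.

A graded identity of `A` is one of `A ⊗ C` for every commutative `C` (`mem_GrIdOf_tensor`): a
substitution lifts to `A ⊗ F[t]`, where the value of `f` vanishes at every point of the parameter
space and hence vanishes, `F` being infinite.

Conversely, substitute `a ⊗ 1` for even and `a ⊗ c` for odd variables, where
`c = ∑_{i < n} eᵢ ⊗ eᵢ`. In characteristic zero `cⁿ = n! (e₀⋯eₙ₋₁) ⊗ (e₀⋯eₙ₋₁) ≠ 0` while
`cⁿ⁺¹ = 0`, so `1, c, …, cⁿ` are linearly independent and some functional `l` sends them all to `1`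
(`exists_functional`). Applying `l` to the value of `f` recovers the value of `f` in `A`, once `n`
bounds the odd degree of `f`.

The ordinary identities follow through the substitution `xₙ ↦ yₙ + zₙ` (even plus odd),
`mem_IdOfSub_sup_iff`. -/

open scoped TensorProduct

noncomputable section

variable (F : Type*) [Field F]

/-- Grassmann (exterior) algebra on generators indexed by `ι`. -/
abbrev Grass (ι : Type*) := ExteriorAlgebra F (ι →₀ F)

/-- The parity (ℤ₂) grading of the Grassmann algebra. -/
def grassPart (ι : Type*) (i : ZMod 2) : Submodule F (Grass F ι) :=
  CliffordAlgebra.evenOdd (0 : QuadraticForm F (ι →₀ F)) i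

/-- The augmentation ideal of the Grassmann algebra: elements with zero constant term. -/
def grassStar (ι : Type*) : Submodule F (Grass F ι) :=
  LinearMap.ker (ExteriorAlgebra.algebraMapInv (M := ι →₀ F)).toLinearMap

/-- The image of `p ⊗ q` inside `A ⊗[F] B`. -/
def tensSub {A B : Type*} [Ring A] [Ring B] [Algebra F A] [Algebra F B]
    (p : Submodule F A) (q : Submodule F B) : Submodule F (A ⊗[F] B) :=
  LinearMap.range (TensorProduct.map p.subtype q.subtype)

/-- The Grassmann envelope `A⁰ ⊗ G⁰ ⊕ A¹ ⊗ G¹` of a ℤ₂-graded algebra. -/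
def grassEnv (A : Type*) [Ring A] [Algebra F A] (𝒜 : ZMod 2 → Submodule F A)
    (ι : Type*) : Submodule F (A ⊗[F] Grass F ι) :=
  tensSub F (𝒜 0) (grassPart F ι 0) ⊔ tensSub F (𝒜 1) (grassPart F ι 1)

/-- The Grassmann envelope without constant terms `(G*)⁰ ⊗ A⁰ ⊕ (G*)¹ ⊗ A¹`. -/
def grassEnvStar (A : Type*) [Ring A] [Algebra F A] (𝒜 : ZMod 2 → Submodule F A)
    (ι : Type*) : Submodule F (A ⊗[F] Grass F ι) :=
  tensSub F (𝒜 0) (grassStar F ι ⊓ grassPart F ι 0) ⊔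
    tensSub F (𝒜 1) (grassStar F ι ⊓ grassPart F ι 1)

/-- The set of (associative, ordinary) polynomial identities of the algebra `A`,
as a submodule of the free associative algebra `F⟨x₀,x₁,…⟩`. -/
def IdSub (A : Type*) [Ring A] [Algebra F A] : Submodule F (FreeAlgebra F ℕ) where
  carrier := {f | ∀ φ : FreeAlgebra F ℕ →ₐ[F] A, φ f = 0}
  add_mem' := by intro a b ha hb φ; rw [map_add, ha φ, hb φ, add_zero]
  zero_mem' := by intro φ; rw [map_zero]
  smul_mem' := by intro c f hf φ; rw [map_smul, hf φ, smul_zero]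

/-- The polynomial identities of a subalgebra given as a submodule `S ⊆ B`:
polynomials vanishing under every substitution of the variables by elements of `S`. -/
def IdOfSub {B : Type*} [Ring B] [Algebra F B] (S : Submodule F B) :
    Submodule F (FreeAlgebra F ℕ) where
  carrier := {f | ∀ φ : FreeAlgebra F ℕ →ₐ[F] B,
    (∀ n : ℕ, φ (FreeAlgebra.ι F n) ∈ S) → φ f = 0}
  add_mem' := by intro a b ha hb φ h; rw [map_add, ha φ h, hb φ h, add_zero]
  zero_mem' := by intro φ h; rw [map_zero]
  smul_mem' := by intro c f hf φ h; rw [map_smul, hf φ h, smul_zero]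

/-- A grading on a matrix algebra induced entrywise by a grading of the coefficients. -/
def matGrade {R : Type*} [Ring R] [Algebra F R] (n : ℕ) (p : Submodule F R) :
    Submodule F (Matrix (Fin n) (Fin n) R) where
  carrier := {M | ∀ a b, M a b ∈ p}
  add_mem' := by intro x y hx hy a b; exact p.add_mem (hx a b) (hy a b)
  zero_mem' := by intro a b; exact p.zero_mem
  smul_mem' := by intro c x hx a b; exact p.smul_mem c (hx a b)

/-- The set of ℤ₂-graded polynomial identities of the graded subalgebra of `B` with
homogeneous components `parts i`, inside the free algebra on even variables
(`Sum.inl n`) and odd variables (`Sum.inr n`). -/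
def GrIdOf {B : Type*} [Ring B] [Algebra F B] (parts : ZMod 2 → Submodule F B) :
    Set (FreeAlgebra F (ℕ ⊕ ℕ)) :=
  {f | ∀ φ : FreeAlgebra F (ℕ ⊕ ℕ) →ₐ[F] B,
    (∀ n : ℕ, φ (FreeAlgebra.ι F (Sum.inl n)) ∈ parts 0) →
    (∀ n : ℕ, φ (FreeAlgebra.ι F (Sum.inr n)) ∈ parts 1) → φ f = 0}

section

variable {F}

section Tensor

variable {A B : Type*} [Ring A] [Ring B] [Algebra F A] [Algebra F B]

lemma tmul_mem_tensSub {p : Submodule F A} {q : Submodule F B} {a : A} {b : B}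
    (ha : a ∈ p) (hb : b ∈ q) : a ⊗ₜ[F] b ∈ tensSub F p q :=
  ⟨(⟨a, ha⟩ : p) ⊗ₜ (⟨b, hb⟩ : q), by simp⟩

lemma tensSub_le {p : Submodule F A} {q : Submodule F B} {S : Submodule F (A ⊗[F] B)}
    (h : ∀ a ∈ p, ∀ b ∈ q, a ⊗ₜ[F] b ∈ S) : tensSub F p q ≤ S := by
  rintro _ ⟨x, rfl⟩
  induction x with
  | zero => simp
  | tmul x y => simpa using h x x.2 y y.2
  | add x y hx hy => rw [map_add]; exact S.add_mem hx hy

end Tensor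

/-! ### Commutative coefficients -/

section Comm

variable {A : Type*} [Ring A] [Algebra F A]

/-- An `A`-valued polynomial function over an infinite field that vanishes everywhere is the zero
polynomial. -/
lemma eq_zero_of_forall_eval [Infinite F] {σ : Type*} (z : A ⊗[F] MvPolynomial σ F)
    (h : ∀ t : σ → F, TensorProduct.map LinearMap.id (MvPolynomial.aeval t).toLinearMap z =
      (0 : A ⊗[F] F)) : z = 0 := by
  classical
  apply (TensorProduct.equivFinsuppOfBasisLeft (Module.Basis.ofVectorSpace F A)).injective
  ext1 i
  rw [map_zero, Finsupp.zero_apply, TensorProduct.equivFinsuppOfBasisLeft_apply]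
  apply MvPolynomial.funext
  intro t
  rw [map_zero]
  have key : ∀ (l : A →ₗ[F] F) (z : A ⊗[F] MvPolynomial σ F),
      MvPolynomial.eval t (TensorProduct.lid F _ (l.rTensor _ z)) =
      TensorProduct.lid F F (l.rTensor F
        (TensorProduct.map LinearMap.id (MvPolynomial.aeval t).toLinearMap z)) := by
    intro l z
    induction z with
    | zero => simp
    | tmul x y => simp [MvPolynomial.aeval_eq_eval]
    | add x y hx hy => simp only [map_add, hx, hy]
  rw [key, h]
  simp

/-- Extending the scalars to a commutative algebra `C`, with `Aⁱ ⊗ C` in degree `i`, preserves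
graded identities. -/
lemma mem_GrIdOf_tensor [Infinite F] {𝒜 : ZMod 2 → Submodule F A} (C : Type*) [CommRing C]
    [Algebra F C] {f : FreeAlgebra F (ℕ ⊕ ℕ)} (hf : f ∈ GrIdOf F 𝒜) :
    f ∈ GrIdOf F (fun i => tensSub F (𝒜 i) (⊤ : Submodule F C)) := by
  intro φ h0 h1
  -- Using all of `C` as the set of parameters makes the evaluation `F[t] → C` onto.
  let R := MvPolynomial C F
  let π : R →ₐ[F] C := MvPolynomial.aeval id
  let P : A ⊗[F] R →ₐ[F] A ⊗[F] C := Algebra.TensorProduct.map (AlgHom.id F A) π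
  have lift (i : ZMod 2) : tensSub F (𝒜 i) (⊤ : Submodule F C) ≤
      (tensSub F (𝒜 i) (⊤ : Submodule F R)).map P.toLinearMap := by
    refine tensSub_le fun a ha c _ => ⟨a ⊗ₜ MvPolynomial.X c, tmul_mem_tensSub ha trivial, ?_⟩
    change a ⊗ₜ[F] MvPolynomial.aeval id (MvPolynomial.X c : R) = a ⊗ₜ c
    rw [MvPolynomial.aeval_X, id]
  choose u hu hu' using fun n => lift 0 (h0 n)
  choose v hv hv' using fun n => lift 1 (h1 n)
  let φ' : FreeAlgebra F (ℕ ⊕ ℕ) →ₐ[F] A ⊗[F] R := FreeAlgebra.lift F (Sum.elim u v)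
  have hφ : φ = P.comp φ' := by
    ext x
    rcases x with n | n
    · simpa [φ'] using (hu' n).symm
    · simpa [φ'] using (hv' n).symm
  have hz : φ' f = 0 := by
    apply eq_zero_of_forall_eval
    intro t
    let E : A ⊗[F] R →ₐ[F] A := (Algebra.TensorProduct.rid F F A).toAlgHom.comp
      (Algebra.TensorProduct.map (AlgHom.id F A) (MvPolynomial.aeval t))
    have hE (i : ZMod 2) : tensSub F (𝒜 i) (⊤ : Submodule F R) ≤ (𝒜 i).comap E.toLinearMap := by
      refine tensSub_le fun a ha r _ => ?_
      simpa [E] using (𝒜 i).smul_mem _ ha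
    have := hf (E.comp φ') (fun n => by simpa [φ'] using hE 0 (hu n))
      (fun n => by simpa [φ'] using hE 1 (hv n))
    exact (Algebra.TensorProduct.rid F F A).injective (this.trans (map_zero _).symm)
  rw [hφ, AlgHom.comp_apply, hz, map_zero]

end Comm

/-! ### Supercommutativity of the Grassmann algebra -/

section Super

variable {ι : Type*}

lemma commute_of_even {x : Grass F ι} (hx : x ∈ grassPart F ι 0) (y : Grass F ι) :
    x * y = y * x := by
  have swap (a b : ι →₀ F) : (CliffordAlgebra.ι (0 : QuadraticForm F (ι →₀ F)) a) *
      CliffordAlgebra.ι 0 b = - (CliffordAlgebra.ι 0 b * CliffordAlgebra.ι 0 a) :=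
    eq_neg_of_add_eq_zero_left (ExteriorAlgebra.ι_add_mul_swap a b)
  have h1 (m : ι →₀ F) : x * CliffordAlgebra.ι 0 m = CliffordAlgebra.ι 0 m * x := by
    induction x, hx using CliffordAlgebra.even_induction with
    | algebraMap r => exact Algebra.commutes r _
    | add x y hx hy h h' => rw [add_mul, mul_add, h, h']
    | ι_mul_ι_mul a b x hx h =>
      rw [mul_assoc, h, ← mul_assoc, mul_assoc (CliffordAlgebra.ι _ a), swap b m, mul_neg,
        ← mul_assoc, swap a m]
      simp only [neg_mul, neg_neg, mul_assoc]
  induction y using CliffordAlgebra.induction with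
  | algebraMap r => exact (Algebra.commutes r _).symm
  | ι m => exact h1 m
  | mul a b ha hb => rw [← mul_assoc, ha, mul_assoc, hb, mul_assoc]
  | add a b ha hb => rw [add_mul, mul_add, ha, hb]

lemma anticommute_of_odd {x y : Grass F ι} (hx : x ∈ grassPart F ι 1)
    (hy : y ∈ grassPart F ι 1) : x * y = - (y * x) := by
  have comm (a b : ι →₀ F) (z : Grass F ι) : (CliffordAlgebra.ι 0 a * CliffordAlgebra.ι 0 b) * z =
      z * (CliffordAlgebra.ι 0 a * CliffordAlgebra.ι 0 b) :=
    commute_of_even (CliffordAlgebra.ι_mul_ι_mem_evenOdd_zero _ a b) z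
  induction x, hx using CliffordAlgebra.odd_induction with
  | ι a =>
    induction y, hy using CliffordAlgebra.odd_induction with
    | ι b => exact eq_neg_of_add_eq_zero_left (ExteriorAlgebra.ι_add_mul_swap a b)
    | add u v hu hv h h' => rw [mul_add, add_mul, h, h', neg_add]
    | ι_mul_ι_mul b c u hu h =>
      rw [← mul_assoc, ← comm, mul_assoc, h, mul_neg, ← mul_assoc]
  | add u v hu hv h h' => rw [mul_add, add_mul, h, h', neg_add]
  | ι_mul_ι_mul b c u hu h =>
    rw [mul_assoc, h, mul_neg, ← mul_assoc, comm, mul_assoc]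

/-- The homogeneous tensors `g ⊗ h` with `g` and `h` of the same parity. -/
def evenTensors (F : Type*) [Field F] (ι : Type*) : Set (Grass F ι ⊗[F] Grass F ι) :=
  {x | ∃ i : ZMod 2, ∃ g ∈ grassPart F ι i, ∃ h ∈ grassPart F ι i, x = g ⊗ₜ h}

lemma evenTensors_comm : ∀ x ∈ evenTensors F ι, ∀ y ∈ evenTensors F ι, x * y = y * x := by
  have par (i : ZMod 2) : i = 0 ∨ i = 1 := by revert i; decide
  rintro _ ⟨i, g, hg, h, hh, rfl⟩ _ ⟨j, g', hg', h', hh', rfl⟩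
  simp only [Algebra.TensorProduct.tmul_mul_tmul]
  rcases par i with rfl | rfl
  · rw [commute_of_even hg, commute_of_even hh]
  rcases par j with rfl | rfl
  · rw [← commute_of_even hg', ← commute_of_even hh']
  · rw [anticommute_of_odd hg hg', anticommute_of_odd hh hh', TensorProduct.neg_tmul,
      TensorProduct.tmul_neg, neg_neg]

open scoped IsMulCommutative in
/-- A commutative algebra with a map to `G ⊗ G` whose image contains `G⁰ ⊗ G⁰ + G¹ ⊗ G¹`. -/
lemma exists_comm_cover.{u, v} (F : Type u) [Field F] (ι : Type v) :
    ∃ (C : Type (max u v)) (_ : CommRing C) (_ : Algebra F C)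
      (w : C →ₐ[F] Grass F ι ⊗[F] Grass F ι), ∀ x ∈ evenTensors F ι, ∃ c, w c = x := by
  have := Algebra.isMulCommutative_adjoin F (evenTensors_comm (F := F) (ι := ι))
  exact ⟨Algebra.adjoin F (evenTensors F ι), inferInstance, inferInstance,
    (Algebra.adjoin F (evenTensors F ι)).val, fun x hx => ⟨⟨x, Algebra.subset_adjoin hx⟩, rfl⟩⟩

end Super

/-! ### Powers of a sum of square-zero elements -/

lemma pow_succ_add_sq_zero {B : Type*} [Ring B] {s x : B} (hc : s * x = x * s) (hx : x * x = 0)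
    (n : ℕ) : (s + x) ^ (n + 1) = s ^ (n + 1) + (n + 1 : ℕ) • (s ^ n * x) := by
  induction n with
  | zero => simp
  | succ n ih =>
    have e : s ^ n * x * s = s ^ (n + 1) * x := by rw [mul_assoc, ← hc, ← mul_assoc, pow_succ]
    rw [pow_succ, ih, add_mul, mul_add, mul_add, smul_mul_assoc, smul_mul_assoc, e,
      mul_assoc (s ^ n), hx, mul_zero, smul_zero, add_zero, ← pow_succ, add_assoc, add_comm (_ * x),
      ← succ_nsmul]

/-- The standard generator `eᵢ`. -/
def gen (F : Type*) [Field F] (i : ℕ) : Grass F ℕ := ExteriorAlgebra.ι F (Finsupp.single i 1)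

/-- The product `e₀ e₁ ⋯ eₙ₋₁`. -/
def genProd (F : Type*) [Field F] (n : ℕ) : Grass F ℕ :=
  (List.ofFn fun i : Fin n => gen F i).prod

lemma genProd_succ (n : ℕ) : genProd F (n + 1) = genProd F n * gen F n := by
  rw [genProd, List.ofFn_succ', List.concat_eq_append, List.prod_append, List.prod_singleton]
  rfl

lemma gen_mem (i : ℕ) : gen F i ∈ grassPart F ℕ 1 := CliffordAlgebra.ι_mem_evenOdd_one _ _

lemma genProd_ne_zero (n : ℕ) : genProd F n ≠ 0 := by
  intro h
  -- The determinant of the first `n` coordinates separates the product from zero.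
  let pr : (ℕ →₀ F) →ₗ[F] (Fin n → F) := LinearMap.pi fun i => Finsupp.lapply (i : ℕ)
  let d : (ℕ →₀ F) [⋀^Fin n]→ₗ[F] F := Matrix.detRowAlternating.compLinearMap pr
  let D : ∀ i, (ℕ →₀ F) [⋀^Fin i]→ₗ[F] F := Pi.single n d
  have h1 : ExteriorAlgebra.liftAlternating D (genProd F n) =
      d (fun i : Fin n => Finsupp.single (i : ℕ) 1) := by
    have : genProd F n =
        ExteriorAlgebra.ιMulti F n (fun i : Fin n => Finsupp.single (i : ℕ) (1 : F)) := by
      rw [ExteriorAlgebra.ιMulti_apply]; rfl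
    rw [this, ExteriorAlgebra.liftAlternating_apply_ιMulti]
    simp [D]
  have h2 : d (fun i : Fin n => Finsupp.single (i : ℕ) 1) = 1 := by
    have : (fun i : Fin n => pr (Finsupp.single (i : ℕ) 1)) = (1 : Matrix (Fin n) (Fin n) F) := by
      ext i j
      simp [pr, Finsupp.single_apply, Matrix.one_apply, Fin.ext_iff]
    change Matrix.det (fun i : Fin n => pr (Finsupp.single (i : ℕ) 1)) = 1
    rw [this, Matrix.det_one]
  rw [h, map_zero, h2] at h1
  exact zero_ne_one h1

/-- The element `c = ∑_{i < n} eᵢ ⊗ eᵢ`. -/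
def diag (F : Type*) [Field F] (n : ℕ) : Grass F ℕ ⊗[F] Grass F ℕ :=
  ∑ i ∈ Finset.range n, gen F i ⊗ₜ gen F i

lemma diag_comm (m n : ℕ) : diag F n * (gen F m ⊗ₜ gen F m) = (gen F m ⊗ₜ gen F m) * diag F n := by
  rw [diag, Finset.sum_mul, Finset.mul_sum]
  exact Finset.sum_congr rfl fun i _ => evenTensors_comm _ ⟨1, _, gen_mem i, _, gen_mem i, rfl⟩ _
    ⟨1, _, gen_mem m, _, gen_mem m, rfl⟩

/-- Only the squarefree terms of `cⁿ` survive, each of the `n!` orderings contributing equally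
because the `eᵢ ⊗ eᵢ` commute. -/
lemma diag_pow (n : ℕ) : diag F n ^ n = n.factorial • (genProd F n ⊗ₜ genProd F n) ∧
    diag F n ^ (n + 1) = 0 := by
  have hsq (n : ℕ) : (gen F n ⊗ₜ[F] gen F n) * (gen F n ⊗ₜ gen F n) = 0 := by
    simp [gen]
  have hs (n : ℕ) : diag F (n + 1) = diag F n + gen F n ⊗ₜ gen F n := Finset.sum_range_succ _ _
  induction n with
  | zero => simp [diag, genProd, Algebra.TensorProduct.one_def]
  | succ n ih =>
    constructor
    · rw [hs, pow_succ_add_sq_zero (diag_comm n n) (hsq n), ih.2, zero_add, ih.1, smul_mul_assoc,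
        smul_smul, Algebra.TensorProduct.tmul_mul_tmul, ← genProd_succ, Nat.factorial_succ]
    · rw [hs, pow_succ_add_sq_zero (diag_comm n n) (hsq n), pow_succ, ih.2]
      simp

lemma diag_pow_ne_zero [CharZero F] (n : ℕ) : diag F n ^ n ≠ 0 := by
  rw [(diag_pow n).1, ← Nat.cast_smul_eq_nsmul F]
  refine smul_ne_zero (Nat.cast_ne_zero.2 n.factorial_ne_zero) fun h => ?_
  obtain ⟨d, hd⟩ : ∃ d : Module.Dual F (Grass F ℕ), d (genProd F n) ≠ 0 := by
    by_contra! hd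
    exact genProd_ne_zero n ((Module.forall_dual_apply_eq_zero_iff F _).1 hd)
  have := congrArg (LinearMap.mul' F F ∘ₗ TensorProduct.map d d) h
  simp [hd] at this

/-- The powers `1, c, …, cⁿ` are linearly independent, the minimal polynomial of `c` being
`Xⁿ⁺¹`; hence some functional takes the value `1` at each of them. -/
lemma exists_functional [CharZero F] (n : ℕ) :
    ∃ l : (Grass F ℕ ⊗[F] Grass F ℕ) →ₗ[F] F, ∀ k ≤ n, l (diag F n ^ k) = 1 := by
  set c := diag F n
  have hint : IsIntegral F c := ⟨Polynomial.X ^ (n + 1), Polynomial.monic_X_pow _, by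
    simpa using (diag_pow n).2⟩
  have hdvd : minpoly F c ∣ Polynomial.X ^ (n + 1) := minpoly.dvd _ _ (by simpa using (diag_pow n).2)
  obtain ⟨j, hj, hass⟩ := (dvd_prime_pow Polynomial.prime_X _).1 hdvd
  have hmin : minpoly F c = Polynomial.X ^ j :=
    Polynomial.eq_of_monic_of_associated (minpoly.monic hint) (Polynomial.monic_X_pow _) hass
  have hcj : c ^ j = 0 := by
    have := minpoly.aeval F c
    rwa [hmin, map_pow, Polynomial.aeval_X] at this
  have hnj : n < j := by
    by_contra! h
    exact diag_pow_ne_zero (F := F) n (pow_eq_zero_of_le h hcj)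
  have hli := linearIndependent_pow (K := F) c
  rw [hmin, Polynomial.natDegree_X_pow] at hli
  obtain ⟨g, hg⟩ := LinearMap.exists_leftInverse_of_injective
    (Fintype.linearCombination F fun i : Fin j => c ^ (i : ℕ))
    (LinearMap.ker_eq_bot.2 (hli.fintypeLinearCombination_injective))
  refine ⟨(∑ i : Fin j, LinearMap.proj i) ∘ₗ g, fun k hk => ?_⟩
  have := LinearMap.congr_fun hg (Pi.single ⟨k, by omega⟩ 1)
  simp only [LinearMap.comp_apply, Fintype.linearCombination_apply_single, one_smul] at this
  simp [this]

/-! ### Recovering the value of a polynomial -/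

/-- If a functional takes the value `1` at enough powers of `c`, then applying it to the value at
`X = c` of a polynomial with coefficients in `A` gives the value at `X = 1`. The bound depends only
on the polynomial, so that `c` and `l` can be chosen after it. -/
lemma exists_bound {A B : Type*} [Ring A] [Algebra F A] [Ring B] [Algebra F B]
    (z : A ⊗[F] Polynomial F) : ∃ N : ℕ, ∀ (c : B) (l : B →ₗ[F] F), (∀ k ≤ N, l (c ^ k) = 1) →
      TensorProduct.map LinearMap.id l
        (Algebra.TensorProduct.map (AlgHom.id F A) (Polynomial.aeval c) z) =
      Algebra.TensorProduct.map (AlgHom.id F A) (Polynomial.aeval (1 : F)) z := by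
  induction z with
  | zero => exact ⟨0, by simp⟩
  | tmul a p =>
    refine ⟨p.natDegree, fun c l h => ?_⟩
    have : l (Polynomial.aeval c p) = Polynomial.aeval (1 : F) p := by
      rw [Polynomial.aeval_eq_sum_range, Polynomial.aeval_eq_sum_range, map_sum]
      refine Finset.sum_congr rfl fun k hk => ?_
      rw [map_smul, h k (by simpa [Nat.lt_succ_iff] using hk), one_pow]
    simp [this]
  | add x y hx hy =>
    obtain ⟨M, hM⟩ := hx
    obtain ⟨N, hN⟩ := hy
    refine ⟨max M N, fun c l h => ?_⟩
    rw [map_add, map_add, map_add, hM c l fun k hk => h k (le_max_of_le_left hk),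
      hN c l fun k hk => h k (le_max_of_le_right hk)]

/-! ### Ordinary and graded identities -/

/-- The substitution `xₙ ↦ yₙ + zₙ` turning ordinary polynomials into graded ones. -/
def splitVars (F : Type*) [Field F] : FreeAlgebra F ℕ →ₐ[F] FreeAlgebra F (ℕ ⊕ ℕ) :=
  FreeAlgebra.lift F fun n => FreeAlgebra.ι F (Sum.inl n) + FreeAlgebra.ι F (Sum.inr n)

lemma mem_IdOfSub_sup_iff {B : Type*} [Ring B] [Algebra F B] (parts : ZMod 2 → Submodule F B)
    (f : FreeAlgebra F ℕ) :
    f ∈ IdOfSub F (parts 0 ⊔ parts 1) ↔ splitVars F f ∈ GrIdOf F parts := by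
  constructor
  · intro hf φ h0 h1
    refine hf (φ.comp (splitVars F)) fun n => ?_
    simpa [splitVars] using Submodule.add_mem_sup (h0 n) (h1 n)
  · intro hf φ h
    choose u hu v hv huv using fun n => Submodule.mem_sup.1 (h n)
    let φ' : FreeAlgebra F (ℕ ⊕ ℕ) →ₐ[F] B := FreeAlgebra.lift F (Sum.elim u v)
    have hφ : φ = φ'.comp (splitVars F) := by
      ext n
      simpa [splitVars, φ'] using (huv n).symm
    rw [hφ]
    exact hf φ' (fun n => by simpa [φ'] using hu n) (fun n => by simpa [φ'] using hv n)

/-! ### The double Grassmann envelope -/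

lemma grId_double [CharZero F] {A : Type*} [Ring A] [Algebra F A]
    (𝒜 : ZMod 2 → Submodule F A) :
    GrIdOf F 𝒜 = GrIdOf F (fun i => tensSub F
      (tensSub F (𝒜 i) (grassPart F ℕ i)) (grassPart F ℕ i)) := by
  let as := Algebra.TensorProduct.assoc F F F A (Grass F ℕ) (Grass F ℕ)
  ext f
  constructor
  · intro hf φ h0 h1
    obtain ⟨C, _, _, w, hw⟩ := exists_comm_cover F ℕ
    let Φ : A ⊗[F] C →ₐ[F] (A ⊗[F] Grass F ℕ) ⊗[F] Grass F ℕ :=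
      as.symm.toAlgHom.comp (Algebra.TensorProduct.map (AlgHom.id F A) w)
    have lift (i : ZMod 2) :
        tensSub F (tensSub F (𝒜 i) (grassPart F ℕ i)) (grassPart F ℕ i) ≤
        (tensSub F (𝒜 i) (⊤ : Submodule F C)).map Φ.toLinearMap := by
      refine tensSub_le fun x hx h hh => ?_
      suffices tensSub F (𝒜 i) (grassPart F ℕ i) ≤
          ((tensSub F (𝒜 i) (⊤ : Submodule F C)).map Φ.toLinearMap).comap
            ((TensorProduct.mk F _ _).flip h) from this hx
      refine tensSub_le fun a ha g hg => ?_
      obtain ⟨c, hc⟩ := hw _ ⟨i, g, hg, h, hh, rfl⟩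
      exact ⟨a ⊗ₜ c, tmul_mem_tensSub ha trivial, by simp [Φ, as, hc]⟩
    choose u hu hu' using fun n => lift 0 (h0 n)
    choose v hv hv' using fun n => lift 1 (h1 n)
    let φ' : FreeAlgebra F (ℕ ⊕ ℕ) →ₐ[F] A ⊗[F] C := FreeAlgebra.lift F (Sum.elim u v)
    have hφ : φ = Φ.comp φ' := by
      ext x
      rcases x with n | n
      · simpa [φ'] using (hu' n).symm
      · simpa [φ'] using (hv' n).symm
    have := mem_GrIdOf_tensor C hf φ' (fun n => by simpa [φ'] using hu n)
      (fun n => by simpa [φ'] using hv n)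
    rw [hφ, AlgHom.comp_apply, this, map_zero]
  · intro hf φ h0 h1
    -- The generic substitution in `A ⊗ F[X]`, where `X` marks the odd variables.
    let θ : FreeAlgebra F (ℕ ⊕ ℕ) →ₐ[F] A ⊗[F] Polynomial F := FreeAlgebra.lift F (Sum.elim
      (fun n => φ (FreeAlgebra.ι F (Sum.inl n)) ⊗ₜ 1)
      (fun n => φ (FreeAlgebra.ι F (Sum.inr n)) ⊗ₜ Polynomial.X))
    obtain ⟨N, hN⟩ := exists_bound (B := Grass F ℕ ⊗[F] Grass F ℕ) (θ f)
    obtain ⟨l, hl⟩ := exists_functional (F := F) N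
    let Ψ := Algebra.TensorProduct.map (AlgHom.id F A) (Polynomial.aeval (R := F) (diag F N))
    have h := hf (as.symm.toAlgHom.comp (Ψ.comp θ)) (fun n => ?_) (fun n => ?_)
    · have hz : Ψ (θ f) = 0 := as.symm.injective (h.trans (map_zero _).symm)
      have h2 := hN _ l hl
      rw [show Algebra.TensorProduct.map (AlgHom.id F A) (Polynomial.aeval (diag F N)) (θ f) = 0
        from hz, map_zero] at h2
      have hφ : φ = ((Algebra.TensorProduct.rid F F A).toAlgHom.comp
          (Algebra.TensorProduct.map (AlgHom.id F A) (Polynomial.aeval (1 : F)))).comp θ := by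
        ext x
        rcases x with n | n <;> simp [θ]
      rw [hφ, AlgHom.comp_apply, AlgHom.comp_apply, ← h2, map_zero]
    · have one : (1 : Grass F ℕ) ∈ grassPart F ℕ 0 :=
        Submodule.one_le.1 (CliffordAlgebra.one_le_evenOdd_zero _)
      have := tmul_mem_tensSub (tmul_mem_tensSub (h0 n) one) one
      simpa [Ψ, θ, as, Algebra.TensorProduct.one_def] using this
    · have : ∑ i ∈ Finset.range N, (φ (FreeAlgebra.ι F (Sum.inr n)) ⊗ₜ gen F i) ⊗ₜ[F] gen F i ∈
          tensSub F (tensSub F (𝒜 1) (grassPart F ℕ 1)) (grassPart F ℕ 1) :=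
        Submodule.sum_mem _ fun i _ =>
          tmul_mem_tensSub (tmul_mem_tensSub (h1 n) (gen_mem i)) (gen_mem i)
      simpa [Ψ, θ, as, diag, TensorProduct.tmul_sum] using this

end

/-- `A` and `G(G(A))` satisfy the same ℤ₂-graded polynomial identities,
and consequently the same ordinary polynomial identities: `Id(A) = Id(G(G(A)))`.  Here
`G(A) = A⁰⊗G⁰ ⊕ A¹⊗G¹ ⊆ A ⊗ G` is graded with even part `A⁰⊗G⁰` and odd part `A¹⊗G¹`,
and `G(G(A)) ⊆ (A ⊗ G) ⊗ G` is its Grassmann envelope. -/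
theorem id_eq_id_double_grassEnv [CharZero F]
    (A : Type*) [Ring A] [Algebra F A] (𝒜 : ZMod 2 → Submodule F A) [GradedAlgebra 𝒜] :
    letI PP : ZMod 2 → Submodule F (A ⊗[F] Grass F ℕ) :=
      fun i => tensSub F (𝒜 i) (grassPart F ℕ i)
    GrIdOf F 𝒜 = GrIdOf F (fun i => tensSub F (PP i) (grassPart F ℕ i)) ∧
    IdSub F A = IdOfSub F (grassEnv F (A ⊗[F] Grass F ℕ) PP ℕ) := by
  refine ⟨grId_double 𝒜, ?_⟩
  have htop : 𝒜 0 ⊔ 𝒜 1 = ⊤ := by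
    rw [← (DirectSum.Decomposition.isInternal 𝒜).submodule_iSup_eq_top]
    apply le_antisymm (sup_le (le_iSup 𝒜 0) (le_iSup 𝒜 1))
    refine iSup_le fun i => ?_
    have par : i = 0 ∨ i = 1 := by revert i; decide
    rcases par with rfl | rfl
    exacts [le_sup_left, le_sup_right]
  have hA : IdSub F A = IdOfSub F (𝒜 0 ⊔ 𝒜 1) := by
    ext f
    rw [htop]
    exact ⟨fun h φ _ => h φ, fun h φ => h φ fun _ => trivial⟩
  rw [hA]
  ext f
  rw [mem_IdOfSub_sup_iff, grId_double 𝒜]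
  exact (mem_IdOfSub_sup_iff (fun i => tensSub F
    (tensSub F (𝒜 i) (grassPart F ℕ i)) (grassPart F ℕ i)) f).symm
end
end

section
/- Let F be a field of characteristic ≠ 2 and let A be an Ω-algebra (a vector space with a family of multilinear n-ary operations). Equip A ⊗ FZ₂ = A ⊕ εA (ε² = 1) with the ℤ₂-grading (A ⊗ FZ₂)⁰ = A, (A ⊗ FZ₂)¹ = εA and operations ω(ε^{i₁}a₁,…,ε^{i_n}a_n) = ε^{i₁+⋯+i_n} ω(a₁,…,a_n). Then A ⊗ FZ₂ is graded-simple if and only if A is simple. -/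
/-!
Write `c = ±1`. The evaluation `π_c : A ⊗ FZ₂ → A`, `a + εb ↦ a + cb`, is a homomorphism of
Ω-algebras (`fzEval_interp`, `fzEval_eval`), and since `2` is invertible the pair
`(π₁, π₋₁)` is injective and detects membership in `I × I` (`ext_fzEval`, `mem_prod_of_fzEval`).
Every computation in `A ⊗ FZ₂` is thereby reduced to one in `A`; in particular all values of
terms vanish in one algebra if and only if they vanish in the other.

If `I` is an ideal of `A`, then `I + εI` is a graded ideal, which gives one direction.
Conversely a graded ideal is `I₀ + εI₁` with `I₀`, `I₁` ideals of `A`, so if `A` is simple it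
suffices to exclude `{I₀, I₁} = {0, A}`. This is where `A² ≠ 0` enters: take a term `t` linear
in the variables `0`, `1` with `f = t(s₀, s₁, …) ≠ 0`. In `A ⊗ FZ₂` the values of `t` at
`(εs₀, εs₁, …)` and at `(s₀, εs₁, …)` are `f` and `εf` (`eval_smul_var` computes their images
under `π₋₁`), and each lies in any ideal that contains its first argument. So `I₁ = A` forces
`f ∈ I₀`, and `I₀ = A` forces `f ∈ I₁`.
-/

open scoped TensorProduct

noncomputable section

universe u v

/-- Terms of the free Ω-algebra over a signature with operation symbols `O` of arities
`ar`, in the variables `X`. -/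
inductive OmegaTerm (O : Type u) (ar : O → ℕ) (X : Type v) : Type (max u v)
  | var : X → OmegaTerm O ar X
  | op (ω : O) (ts : Fin (ar ω) → OmegaTerm O ar X) : OmegaTerm O ar X

variable {O : Type u} {ar : O → ℕ}

/-- The number of occurrences of the variable `x` in a term. -/
def OmegaTerm.varCount {X : Type v} [DecidableEq X] : OmegaTerm O ar X → X → ℕ
  | .var y, x => if y = x then 1 else 0
  | .op _ ts, x => ∑ i, (ts i).varCount x

variable (F : Type*) [Field F] {M : Type*} [AddCommGroup M] [Module F M]

/-- Evaluation of a term in an Ω-algebra `(M, interp)` under a substitution `φ`. -/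
def OmegaTerm.eval {X : Type v}
    (interp : ∀ ω : O, MultilinearMap F (fun _ : Fin (ar ω) => M) M)
    (φ : X → M) : OmegaTerm O ar X → M
  | .var x => φ x
  | .op ω ts => interp ω (fun i => (ts i).eval interp φ)

/-- `I` is an ideal of the Ω-algebra `(M, interp)`: it is closed under applying any
operation of positive arity with one entry in `I`. -/
def OmegaIdeal (interp : ∀ ω : O, MultilinearMap F (fun _ : Fin (ar ω) => M) M)
    (I : Submodule F M) : Prop :=
  ∀ (ω : O), 0 < ar ω → ∀ (x : Fin (ar ω) → M) (s : Fin (ar ω)),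
    x s ∈ I → interp ω x ∈ I

/-- The square `A·A` of an Ω-algebra: the span of all values `f(s₁,s₂,a₁,…,a_r)` of
terms `f` linear in their first two variables. -/
def omegaSq (interp : ∀ ω : O, MultilinearMap F (fun _ : Fin (ar ω) => M) M) :
    Submodule F M :=
  Submodule.span F {z | ∃ (t : OmegaTerm O ar ℕ) (φ : ℕ → M),
    t.varCount 0 = 1 ∧ t.varCount 1 = 1 ∧ z = t.eval F interp φ}

/-- The Ω-algebra `(M, interp)` is simple: `M² ≠ 0` and there are no nontrivial proper
ideals. -/
def OmegaSimple (interp : ∀ ω : O, MultilinearMap F (fun _ : Fin (ar ω) => M) M) : Prop :=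
  omegaSq F interp ≠ ⊥ ∧ ∀ I : Submodule F M, OmegaIdeal F interp I → I = ⊥ ∨ I = ⊤

/-- A submodule is graded w.r.t. a ℤ₂-grading `p` if it is the sum of its homogeneous
components. -/
def IsGradedSub (p : ZMod 2 → Submodule F M) (I : Submodule F M) : Prop :=
  (p 0 ⊓ I) ⊔ (p 1 ⊓ I) = I

/-- The ℤ₂-graded Ω-algebra `(M, interp, p)` is graded-simple: `M² ≠ 0` and there are no
nontrivial proper graded ideals. -/
def OmegaGradedSimple (interp : ∀ ω : O, MultilinearMap F (fun _ : Fin (ar ω) => M) M)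
    (p : ZMod 2 → Submodule F M) : Prop :=
  omegaSq F interp ≠ ⊥ ∧
    ∀ I : Submodule F M, OmegaIdeal F interp I → IsGradedSub F p I → I = ⊥ ∨ I = ⊤

/-- Compatibility of a ℤ₂-grading with the Ω-algebra structure: operations add degrees. -/
def OmegaGradedCompat (interp : ∀ ω : O, MultilinearMap F (fun _ : Fin (ar ω) => M) M)
    (p : ZMod 2 → Submodule F M) : Prop :=
  ∀ (ω : O) (d : Fin (ar ω) → ZMod 2) (x : Fin (ar ω) → M),
    (∀ i, x i ∈ p (d i)) → interp ω x ∈ p (∑ i, d i)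

/-- The Ω-algebra structure on `A ⊗ FZ₂ = A ⊕ εA` (realized as `M × M`, with
`(a, b) = a + εb` and `ε² = 1`):
`ω(ε^{i₁}a₁,…,ε^{i_n}a_n) = ε^{i₁+⋯+i_n} ω(a₁,…,a_n)`, extended multilinearly. -/
def fzInterp (interp : ∀ ω : O, MultilinearMap F (fun _ : Fin (ar ω) => M) M) (ω : O) :
    MultilinearMap F (fun _ : Fin (ar ω) => M × M) (M × M) :=
  (LinearMap.inl F M M).compMultilinearMap
      (∑ S ∈ Finset.univ.filter
          (fun S : Fin (ar ω) → Bool => (Finset.univ.filter fun i => S i = true).card % 2 = 0),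
        (interp ω).compLinearMap
          (fun i => if S i then LinearMap.snd F M M else LinearMap.fst F M M)) +
    (LinearMap.inr F M M).compMultilinearMap
      (∑ S ∈ Finset.univ.filter
          (fun S : Fin (ar ω) → Bool => (Finset.univ.filter fun i => S i = true).card % 2 = 1),
        (interp ω).compLinearMap
          (fun i => if S i then LinearMap.snd F M M else LinearMap.fst F M M))

/-- The ℤ₂-grading of `A ⊗ FZ₂`: even part `A`, odd part `εA`. -/
def fzGrading (i : ZMod 2) : Submodule F (M × M) :=
  if i = 0 then LinearMap.range (LinearMap.inl F M M)
  else LinearMap.range (LinearMap.inr F M M)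

section FzHelpers

/-! ### The specializations at `ε = ±1` -/

/-- The specialization `a + εb ↦ a + cb`; an algebra homomorphism `A ⊗ FZ₂ → A` when
`c ^ 2 = 1`. -/
def fzEval (c : F) : M × M →ₗ[F] M := LinearMap.fst F M M + c • LinearMap.snd F M M

@[simp] lemma fzEval_apply (c : F) (z : M × M) : fzEval F c z = z.1 + c • z.2 := rfl

variable {F}

lemma fzEval_interp (interp : ∀ ω : O, MultilinearMap F (fun _ : Fin (ar ω) => M) M)
    {c : F} (hc : c ^ 2 = 1) (ω : O) (x : Fin (ar ω) → M × M) :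
    fzEval F c (fzInterp F interp ω x) = interp ω (fun i => fzEval F c (x i)) := by
  -- Only the parity of an exponent of `c` matters, which matches the even/odd split of the
  -- sums defining `fzInterp`.
  have hpow : ∀ n : ℕ, c ^ n = if n % 2 = 0 then 1 else c := by
    intro n
    conv_lhs => rw [← Nat.div_add_mod n 2, pow_add, pow_mul, hc, one_pow, one_mul]
    rcases Nat.mod_two_eq_zero_or_one n with h | h <;> simp [h]
  have h1 : ∀ i, fzEval F c (x i)
      = ∑ b : Bool, (if b = true then c else 1) • (if b = true then (x i).2 else (x i).1) := by
    intro i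
    simp [add_comm]
  have h2 : ∀ (S : Fin (ar ω) → Bool), interp ω (fun i =>
      (if S i = true then c else 1) • (if S i = true then (x i).2 else (x i).1))
      = (if (Finset.univ.filter fun i => S i = true).card % 2 = 0 then (1 : F) else c) •
        interp ω (fun i => (if S i = true then (x i).2 else (x i).1)) := by
    intro S
    rw [MultilinearMap.map_smul_univ, ← hpow, Finset.prod_ite]
    simp
  have h3 : ∀ (S : Fin (ar ω) → Bool), (interp ω) (fun i =>
      (if S i = true then LinearMap.snd F M M else LinearMap.fst F M M) (x i))
      = interp ω (fun i => (if S i = true then (x i).2 else (x i).1)) := by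
    intro S
    congr 1
    funext i
    split_ifs <;> rfl
  simp_rw [h1]
  rw [MultilinearMap.map_sum]
  simp_rw [h2]
  simp only [fzInterp, fzEval_apply, add_apply,
    LinearMap.compMultilinearMap_apply, sum_apply,
    MultilinearMap.compLinearMap_apply, h3, LinearMap.inl_apply, LinearMap.inr_apply,
    Prod.mk_add_mk, add_zero, zero_add, Finset.smul_sum, ite_smul, one_smul]
  rw [Finset.sum_ite]
  simp only [Nat.mod_two_not_eq_zero]

lemma fzEval_eval (interp : ∀ ω : O, MultilinearMap F (fun _ : Fin (ar ω) => M) M)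
    {c : F} (hc : c ^ 2 = 1) {X : Type*} (φ : X → M × M) (t : OmegaTerm O ar X) :
    fzEval F c (t.eval F (fzInterp F interp) φ)
      = t.eval F interp (fun x => fzEval F c (φ x)) := by
  induction t with
  | var x => rfl
  | op ω ts ih =>
    simp only [OmegaTerm.eval]
    rw [fzEval_interp interp hc]
    simp only [ih]

/-- `π₁` and `π₋₁` of an element having values in `I` puts both components in `I`, because
`2a = (a + b) + (a - b)` and `2` is invertible. -/
lemma mem_prod_of_fzEval (h2 : (2 : F) ≠ 0) (I : Submodule F M) {z : M × M}
    (hp : fzEval F 1 z ∈ I) (hm : fzEval F (-1) z ∈ I) : z.1 ∈ I ∧ z.2 ∈ I := by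
  simp only [fzEval_apply, one_smul, neg_smul] at hp hm
  have h1 : z.1 ∈ I := by
    rw [← Submodule.smul_mem_iff I h2]
    convert I.add_mem hp hm using 1
    rw [two_smul]
    abel
  exact ⟨h1, (Submodule.add_mem_iff_right I h1).1 hp⟩

lemma ext_fzEval (h2 : (2 : F) ≠ 0) {z w : M × M}
    (hp : fzEval F 1 z = fzEval F 1 w) (hm : fzEval F (-1) z = fzEval F (-1) w) : z = w := by
  have := mem_prod_of_fzEval h2 ⊥ (z := z - w)
    (by rw [map_sub, hp, sub_self]; exact zero_mem _)
    (by rw [map_sub, hm, sub_self]; exact zero_mem _)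
  simpa [sub_eq_zero, Prod.ext_iff] using this

/-! ### Values of terms, ideals and squares -/

/-- Homogeneity in a single variable: scaling the variable `v` by `c` scales the value of a term
by `c` to the number of occurrences of `v`. -/
lemma eval_smul_var (interp : ∀ ω : O, MultilinearMap F (fun _ : Fin (ar ω) => M) M)
    {X : Type*} [DecidableEq X] (v : X) (c : F) (φ : X → M) (t : OmegaTerm O ar X) :
    t.eval F interp (fun x => (if x = v then c else 1) • φ x)
      = c ^ t.varCount v • t.eval F interp φ := by
  induction t with
  | var x =>
    simp only [OmegaTerm.eval, OmegaTerm.varCount]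
    split_ifs <;> simp
  | op ω ts ih =>
    simp only [OmegaTerm.eval, OmegaTerm.varCount, ih]
    rw [MultilinearMap.map_smul_univ, Finset.prod_pow_eq_pow_sum]

/-- An ideal absorbs the values of a term in which some occurring variable is assigned an
element of the ideal. -/
lemma eval_mem_ideal {interp : ∀ ω : O, MultilinearMap F (fun _ : Fin (ar ω) => M) M}
    {I : Submodule F M} (hI : OmegaIdeal F interp I) {X : Type*} [DecidableEq X] (v : X)
    (φ : X → M) (hv : φ v ∈ I) (t : OmegaTerm O ar X) (ht : t.varCount v ≠ 0) :
    t.eval F interp φ ∈ I := by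
  induction t with
  | var x =>
    simp only [OmegaTerm.varCount, ne_eq, ite_eq_right_iff, one_ne_zero, imp_false,
      not_not] at ht
    simpa [OmegaTerm.eval, ht] using hv
  | op ω ts ih =>
    obtain ⟨s, -, hs⟩ := Finset.exists_ne_zero_of_sum_ne_zero ht
    exact hI ω (Fin.pos s) _ s (ih s hs)

lemma omegaSq_ne_bot_iff (interp : ∀ ω : O, MultilinearMap F (fun _ : Fin (ar ω) => M) M) :
    omegaSq F interp ≠ ⊥ ↔ ∃ (t : OmegaTerm O ar ℕ) (φ : ℕ → M),
      t.varCount 0 = 1 ∧ t.varCount 1 = 1 ∧ t.eval F interp φ ≠ 0 := by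
  rw [omegaSq, Ne, Submodule.span_eq_bot]
  constructor
  · intro h
    push Not at h
    obtain ⟨_, ⟨t, φ, h0, h1, rfl⟩, hz⟩ := h
    exact ⟨t, φ, h0, h1, hz⟩
  · rintro ⟨t, φ, h0, h1, hz⟩ h
    exact hz (h _ ⟨t, φ, h0, h1, rfl⟩)

lemma omegaSq_fz_ne_bot_iff (h2 : (2 : F) ≠ 0)
    (interp : ∀ ω : O, MultilinearMap F (fun _ : Fin (ar ω) => M) M) :
    omegaSq F (fzInterp F interp) ≠ ⊥ ↔ omegaSq F interp ≠ ⊥ := by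
  rw [omegaSq_ne_bot_iff, omegaSq_ne_bot_iff]
  constructor
  · rintro ⟨t, φ, h0, h1, hz⟩
    by_contra! h
    refine hz (ext_fzEval h2 ?_ ?_)
    · rw [fzEval_eval interp (by simp), map_zero, h t _ h0 h1]
    · rw [fzEval_eval interp (by simp), map_zero, h t _ h0 h1]
  · rintro ⟨t, φ, h0, h1, hz⟩
    refine ⟨t, fun x => (φ x, 0), h0, h1, fun h => hz ?_⟩
    have := fzEval_eval interp (c := 1) (by simp) (fun x => (φ x, (0 : M))) t
    rw [h, map_zero] at this
    simpa using this.symm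

/-! ### Ideals and graded subspaces of `A ⊗ FZ₂` -/

lemma isGradedSub_fz_iff (I : Submodule F (M × M)) :
    IsGradedSub F (fzGrading F) I ↔ ∀ z ∈ I, (z.1, (0 : M)) ∈ I ∧ ((0 : M), z.2) ∈ I := by
  have e0 : fzGrading F (M := M) 0 = LinearMap.range (LinearMap.inl F M M) := by
    simp [fzGrading]
  have e1 : fzGrading F (M := M) 1 = LinearMap.range (LinearMap.inr F M M) := by
    simp [fzGrading]
  rw [IsGradedSub, e0, e1]
  constructor
  · intro h z hz
    rw [← h] at hz
    obtain ⟨_, ⟨⟨a, rfl⟩, ha⟩, _, ⟨⟨b, rfl⟩, hb⟩, rfl⟩ := Submodule.mem_sup.1 hz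
    simp only [LinearMap.inl_apply, LinearMap.inr_apply] at ha hb ⊢
    simpa using And.intro ha hb
  · intro h
    refine le_antisymm (sup_le inf_le_right inf_le_right) fun z hz => ?_
    refine Submodule.mem_sup.2 ⟨(z.1, 0), ⟨⟨z.1, rfl⟩, (h z hz).1⟩, (0, z.2),
      ⟨⟨z.2, rfl⟩, (h z hz).2⟩, by simp⟩

/-- If `I` is an ideal of `A`, then `I + εI` is an ideal of `A ⊗ FZ₂`. -/
lemma omegaIdeal_prod (h2 : (2 : F) ≠ 0)
    {interp : ∀ ω : O, MultilinearMap F (fun _ : Fin (ar ω) => M) M}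
    {I : Submodule F M} (hI : OmegaIdeal F interp I) :
    OmegaIdeal F (fzInterp F interp) (I.prod I) := by
  intro ω hω x s hs
  have key : ∀ c : F, c ^ 2 = 1 → fzEval F c (fzInterp F interp ω x) ∈ I := by
    intro c hc
    rw [fzEval_interp interp hc]
    exact hI ω hω _ s (I.add_mem hs.1 (I.smul_mem c hs.2))
  exact mem_prod_of_fzEval h2 I (key 1 (by simp)) (key (-1) (by simp))

/-- The even part `I₀` of an ideal of `A ⊗ FZ₂` is an ideal of `A`. -/
lemma omegaIdeal_even (h2 : (2 : F) ≠ 0)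
    {interp : ∀ ω : O, MultilinearMap F (fun _ : Fin (ar ω) => M) M}
    {I : Submodule F (M × M)} (hI : OmegaIdeal F (fzInterp F interp) I) :
    OmegaIdeal F interp (I.comap (LinearMap.inl F M M)) := by
  intro ω hω x s hs
  have key := hI ω hω (fun i => (x i, 0)) s hs
  have e : fzInterp F interp ω (fun i => (x i, 0)) = (interp ω x, 0) := by
    apply ext_fzEval h2
    · rw [fzEval_interp interp (by simp)]; simp
    · rw [fzEval_interp interp (by simp)]; simp
  rwa [e] at key

/-- The odd part `I₁` of an ideal of `A ⊗ FZ₂` is an ideal of `A`: apply operations to one odd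
argument and otherwise even ones. -/
lemma omegaIdeal_odd (h2 : (2 : F) ≠ 0)
    {interp : ∀ ω : O, MultilinearMap F (fun _ : Fin (ar ω) => M) M}
    {I : Submodule F (M × M)} (hI : OmegaIdeal F (fzInterp F interp) I) :
    OmegaIdeal F interp (I.comap (LinearMap.inr F M M)) := by
  intro ω hω x s hs
  have key := hI ω hω (fun i => if i = s then (0, x i) else (x i, 0)) s (by simpa using hs)
  have e : fzInterp F interp ω (fun i => if i = s then (0, x i) else (x i, 0))
      = (0, interp ω x) := by
    have h : ∀ c : F, (fun i => fzEval F c (if i = s then (0, x i) else (x i, 0)))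
        = fun i => (if i = s then c else 1) • x i := by
      intro c
      funext i
      split_ifs <;> simp
    apply ext_fzEval h2
    · rw [fzEval_interp interp (by simp), h, MultilinearMap.map_smul_univ]; simp
    · rw [fzEval_interp interp (by simp), h, MultilinearMap.map_smul_univ]; simp
  rwa [e] at key

/-! ### Parity of values of terms in `A ⊗ FZ₂` -/

/-- Two odd arguments in the variables `0`, `1` of a term linear in both give an even value. -/
lemma eval_odd_odd (h2 : (2 : F) ≠ 0)
    (interp : ∀ ω : O, MultilinearMap F (fun _ : Fin (ar ω) => M) M)
    (t : OmegaTerm O ar ℕ) (φ : ℕ → M) (h0 : t.varCount 0 = 1) (h1 : t.varCount 1 = 1) :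
    t.eval F (fzInterp F interp) (fun x => if x = 0 ∨ x = 1 then (0, φ x) else (φ x, 0))
      = (t.eval F interp φ, 0) := by
  have h : ∀ c : F, (fun x => fzEval F c (if x = 0 ∨ x = 1 then (0, φ x) else (φ x, 0)))
      = fun x => (if x = 0 then c else 1) • (if x = 1 then c else 1) • φ x := by
    intro c
    funext x
    by_cases hx : x = 0
    · simp [hx]
    · by_cases hx' : x = 1 <;> simp [hx, hx']
  apply ext_fzEval h2
  · rw [fzEval_eval interp (by simp), h, eval_smul_var, eval_smul_var]; simp
  · rw [fzEval_eval interp (by simp), h, eval_smul_var, eval_smul_var]; simp [h0, h1]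

/-- One odd argument, in the variable `1` of a term linear in it, gives an odd value. -/
lemma eval_even_odd (h2 : (2 : F) ≠ 0)
    (interp : ∀ ω : O, MultilinearMap F (fun _ : Fin (ar ω) => M) M)
    (t : OmegaTerm O ar ℕ) (φ : ℕ → M) (h1 : t.varCount 1 = 1) :
    t.eval F (fzInterp F interp) (fun x => if x = 1 then (0, φ x) else (φ x, 0))
      = (0, t.eval F interp φ) := by
  have h : ∀ c : F, (fun x => fzEval F c (if x = 1 then (0, φ x) else (φ x, 0)))
      = fun x => (if x = 1 then c else 1) • φ x := by
    intro c
    funext x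
    split_ifs <;> simp
  apply ext_fzEval h2
  · rw [fzEval_eval interp (by simp), h, eval_smul_var]; simp
  · rw [fzEval_eval interp (by simp), h, eval_smul_var]; simp [h1]

end FzHelpers

/-! ### Graded-simplicity of `A ⊗ FZ₂` -/

/-- over a field of characteristic `≠ 2`, for any Ω-algebra `A`, the
ℤ₂-graded Ω-algebra `A ⊗ FZ₂` (even part `A`, odd part `εA`, `ε² = 1`) is graded-simple
if and only if `A` is simple. -/
theorem fz_gradedSimple_iff_simple (h2 : (2 : F) ≠ 0)
    (interp : ∀ ω : O, MultilinearMap F (fun _ : Fin (ar ω) => M) M) :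
    OmegaGradedSimple F (fzInterp F interp) (fzGrading F) ↔ OmegaSimple F interp := by
  constructor
  · rintro ⟨hsq, hB⟩
    refine ⟨(omegaSq_fz_ne_bot_iff h2 interp).1 hsq, fun I hI => ?_⟩
    rcases hB (I.prod I) (omegaIdeal_prod h2 hI)
      ((isGradedSub_fz_iff _).2 fun z hz => ⟨⟨hz.1, I.zero_mem⟩, ⟨I.zero_mem, hz.2⟩⟩) with h | h
    · left
      rw [Submodule.eq_bot_iff]
      intro a ha
      have : (a, a) ∈ I.prod I := ⟨ha, ha⟩
      rw [h] at this
      simpa using this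
    · right
      rw [Submodule.eq_top_iff']
      intro a
      have : (a, a) ∈ I.prod I := h ▸ Submodule.mem_top
      exact this.1
  · rintro ⟨hsq, hA⟩
    refine ⟨(omegaSq_fz_ne_bot_iff h2 interp).2 hsq, fun I hI hgr => ?_⟩
    rw [isGradedSub_fz_iff] at hgr
    obtain ⟨t, φ, h0, h1, hz⟩ := (omegaSq_ne_bot_iff interp).1 hsq
    have hI₀ := hA _ (omegaIdeal_even h2 hI)
    have hI₁ := hA _ (omegaIdeal_odd h2 hI)
    have even_of_odd : I.comap (LinearMap.inr F M M) = ⊤ →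
        t.eval F interp φ ∈ I.comap (LinearMap.inl F M M) := by
      intro htop
      have hmem : φ 0 ∈ I.comap (LinearMap.inr F M M) := htop ▸ Submodule.mem_top
      have := eval_mem_ideal hI 0
        (fun x => if x = 0 ∨ x = 1 then (0, φ x) else (φ x, 0)) (by simpa using hmem) t
        (by simp [h0])
      rwa [eval_odd_odd h2 interp t φ h0 h1] at this
    have odd_of_even : I.comap (LinearMap.inl F M M) = ⊤ →
        t.eval F interp φ ∈ I.comap (LinearMap.inr F M M) := by
      intro htop
      have hmem : φ 0 ∈ I.comap (LinearMap.inl F M M) := htop ▸ Submodule.mem_top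
      have := eval_mem_ideal hI 0
        (fun x => if x = 1 then (0, φ x) else (φ x, 0)) (by simpa using hmem) t
        (by simp [h0])
      rwa [eval_even_odd h2 interp t φ h1] at this
    rcases hI₀ with b0 | t0 <;> rcases hI₁ with b1 | t1
    · left
      rw [Submodule.eq_bot_iff]
      intro z hz
      obtain ⟨ha, hb⟩ := hgr z hz
      have ha' : z.1 ∈ I.comap (LinearMap.inl F M M) := ha
      have hb' : z.2 ∈ I.comap (LinearMap.inr F M M) := hb
      rw [b0, Submodule.mem_bot] at ha'
      rw [b1, Submodule.mem_bot] at hb'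
      exact Prod.ext ha' hb'
    · have := even_of_odd t1
      rw [b0, Submodule.mem_bot] at this
      exact absurd this hz
    · have := odd_of_even t0
      rw [b1, Submodule.mem_bot] at this
      exact absurd this hz
    · right
      rw [Submodule.eq_top_iff']
      intro z
      have ha : z.1 ∈ I.comap (LinearMap.inl F M M) := t0 ▸ Submodule.mem_top
      have hb : z.2 ∈ I.comap (LinearMap.inr F M M) := t1 ▸ Submodule.mem_top
      have := I.add_mem ha hb
      simpa using this
end
end

section
/- Let A = A⁰ ⊕ A¹ be a ℤ₂-graded Ω-algebra (over any field) that is graded-simple but not simple as an ungraded Ω-algebra, and let I ⊆ A be an ungraded ideal with I ≠ 0 and I ≠ A. Then the restrictions to I of the two grading projections π₀ : A → A⁰ and π₁ : A → A¹ are linear isomorphisms onto A⁰ and A¹ respectively. -/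
/-!
A family of subspaces `H c ≤ p c` (`c : ZMod 2`) that is stable under all operations with
homogeneous entries spans a graded ideal `H 0 ⊔ H 1`: by multilinearity it suffices to look at
homogeneous entries. Graded-simplicity therefore forces either `H c = 0` for both `c`, or
`H c = p c` for both `c` (`graded_dichotomy`). This is applied to two families attached to `I`.

* `H c = p c ⊓ I`. The ideal it spans lies in `I ≠ ⊤`, so `p c ⊓ I = 0`; as `p c` is the kernel
  of the projection to the other component, both projections are injective on `I`.
* `H c = p c ⊓ (I ⊔ p (c + 1))`, which is the image of `I` under the projection to `p c`. These
  cannot both vanish since `I ≠ 0`, so both projections map `I` onto the component.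
-/

open scoped TensorProduct

noncomputable section

universe u v

variable {O : Type u} {ar : O → ℕ}

variable (F : Type*) [Field F] {M : Type*} [AddCommGroup M] [Module F M]

/-- It suffices to test the ideal property on homogeneous entries. -/
theorem omegaIdeal_sup_of_homogeneous
    (interp : ∀ ω : O, MultilinearMap F (fun _ : Fin (ar ω) => M) M)
    (p : ZMod 2 → Submodule F M) (hcompl : IsCompl (p 0) (p 1))
    (H : ZMod 2 → Submodule F M) (hHp : ∀ c, H c ≤ p c)
    (hH : ∀ (ω : O) (d : Fin (ar ω) → ZMod 2) (x : Fin (ar ω) → M) (s : Fin (ar ω)),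
      (∀ i, x i ∈ p (d i)) → x s ∈ H (d s) → interp ω x ∈ H (∑ i, d i)) :
    OmegaIdeal F interp (H 0 ⊔ H 1) := by
  intro ω _ x s hs
  have hle : ∀ c, H c ≤ H 0 ⊔ H 1 := by
    intro c
    fin_cases c
    · exact le_sup_left
    · exact le_sup_right
  have key : ∀ i, ∃ y : ZMod 2 → M,
      x i = ∑ c, y c ∧ (∀ c, y c ∈ p c) ∧ (i = s → ∀ c, y c ∈ H c) := by
    intro i
    by_cases his : i = s
    · subst his
      obtain ⟨a, ha, b, hb, hab⟩ := Submodule.mem_sup.1 hs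
      have hmem : ∀ c : ZMod 2, (![a, b] : Fin 2 → M) c ∈ H c := by
        intro c
        fin_cases c
        · exact ha
        · exact hb
      refine ⟨(![a, b] : Fin 2 → M), ?_, fun c => hHp c (hmem c), fun _ => hmem⟩
      rw [← hab]
      exact (Fin.sum_univ_two (![a, b] : Fin 2 → M)).symm
    · have hx : x i ∈ p 0 ⊔ p 1 := by rw [hcompl.sup_eq_top]; trivial
      obtain ⟨a, ha, b, hb, hab⟩ := Submodule.mem_sup.1 hx
      refine ⟨(![a, b] : Fin 2 → M), ?_, ?_, fun h => absurd h his⟩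
      · rw [← hab]
        exact (Fin.sum_univ_two (![a, b] : Fin 2 → M)).symm
      · intro c
        fin_cases c
        · exact ha
        · exact hb
  choose y hxy hyp hyH using key
  have hx : x = fun i => ∑ c, y i c := funext hxy
  rw [hx, MultilinearMap.map_sum]
  refine Submodule.sum_mem _ fun r _ => hle (∑ i, r i) ?_
  exact hH ω r _ s (fun i => hyp i (r i)) (hyH s rfl (r s))

/-- In a graded-simple algebra, a family of subspaces of the homogeneous components that is
stable under the operations is either zero or everything. -/
theorem graded_dichotomy
    (interp : ∀ ω : O, MultilinearMap F (fun _ : Fin (ar ω) => M) M)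
    (p : ZMod 2 → Submodule F M) (hcompl : IsCompl (p 0) (p 1))
    (hgs : OmegaGradedSimple F interp p)
    (H : ZMod 2 → Submodule F M) (hHp : ∀ c, H c ≤ p c)
    (hH : ∀ (ω : O) (d : Fin (ar ω) → ZMod 2) (x : Fin (ar ω) → M) (s : Fin (ar ω)),
      (∀ i, x i ∈ p (d i)) → x s ∈ H (d s) → interp ω x ∈ H (∑ i, d i)) :
    (H 0 = ⊥ ∧ H 1 = ⊥) ∨ (H 0 = p 0 ∧ H 1 = p 1) := by
  have hgr : IsGradedSub F p (H 0 ⊔ H 1) :=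
    le_antisymm (sup_le inf_le_right inf_le_right)
      (sup_le_sup (le_inf (hHp 0) le_sup_left) (le_inf (hHp 1) le_sup_right))
  rcases hgs.2 _ (omegaIdeal_sup_of_homogeneous F interp p hcompl H hHp hH) hgr with h | h
  · exact Or.inl (sup_eq_bot_iff.1 h)
  · refine Or.inr ⟨le_antisymm (hHp 0) fun a ha => ?_, le_antisymm (hHp 1) fun a ha => ?_⟩
    · obtain ⟨u, hu, v, hv, huv⟩ := Submodule.mem_sup.1 (h ▸ Submodule.mem_top : a ∈ H 0 ⊔ H 1)
      have hv0 : v = 0 := by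
        refine Submodule.disjoint_def.1 hcompl.disjoint v ?_ (hHp 1 hv)
        rw [eq_sub_of_add_eq' huv]
        exact sub_mem ha (hHp 0 hu)
      rw [← huv, hv0, add_zero]
      exact hu
    · obtain ⟨u, hu, v, hv, huv⟩ := Submodule.mem_sup.1 (h ▸ Submodule.mem_top : a ∈ H 0 ⊔ H 1)
      have hu0 : u = 0 := by
        refine Submodule.disjoint_def.1 hcompl.disjoint u (hHp 0 hu) ?_
        rw [eq_sub_of_add_eq huv]
        exact sub_mem ha (hHp 1 hv)
      rw [← huv, hu0, zero_add]
      exact hv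

theorem bijective_linearProj_restrict (q r I : Submodule F M) (h : IsCompl q r)
    (hinj : r ⊓ I = ⊥) (hsurj : q ≤ I ⊔ r) :
    Function.Bijective (fun x : I => Submodule.projectionOnto q r h (x : M)) := by
  constructor
  · intro x y hxy
    have h0 : Submodule.projectionOnto q r h ((x : M) - y) = 0 := by
      rw [map_sub, sub_eq_zero]
      exact hxy
    have hr := (Submodule.projectionOnto_apply_eq_zero_iff h).1 h0
    have : (x : M) - y ∈ r ⊓ I := ⟨hr, sub_mem x.2 y.2⟩
    rw [hinj, Submodule.mem_bot, sub_eq_zero] at this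
    exact Subtype.ext this
  · intro a
    obtain ⟨u, hu, v, hv, huv⟩ := Submodule.mem_sup.1 (hsurj a.2)
    refine ⟨⟨u, hu⟩, ?_⟩
    have hu' : u = (a : M) - v := eq_sub_of_add_eq huv
    change Submodule.projectionOnto q r h u = a
    rw [hu', map_sub, Submodule.projectionOnto_apply_left,
      (Submodule.projectionOnto_apply_eq_zero_iff h).2 hv, sub_zero]

/-- if the ℤ₂-graded Ω-algebra `A = A⁰ ⊕ A¹` is graded-simple but not
simple, and `I` is a proper nonzero ungraded ideal, then the grading projections
`π₀ : A → A⁰` and `π₁ : A → A¹` restrict to linear bijections on `I`. -/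
theorem proj_bijective_on_ideal
    (interp : ∀ ω : O, MultilinearMap F (fun _ : Fin (ar ω) => M) M)
    (p : ZMod 2 → Submodule F M) (hcompl : IsCompl (p 0) (p 1))
    (hcompat : OmegaGradedCompat F interp p)
    (hgs : OmegaGradedSimple F interp p) (hns : ¬ OmegaSimple F interp)
    (I : Submodule F M) (hI : OmegaIdeal F interp I) (hI0 : I ≠ ⊥) (hIT : I ≠ ⊤) :
    Function.Bijective
      (fun x : I => Submodule.linearProjOfIsCompl (p 0) (p 1) hcompl (x : M)) ∧
    Function.Bijective
      (fun x : I => Submodule.linearProjOfIsCompl (p 1) (p 0) hcompl.symm (x : M)) := by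
  have hinj := graded_dichotomy F interp p hcompl hgs (fun c => p c ⊓ I)
    (fun c => inf_le_left) (fun ω d x s hx hs =>
      ⟨hcompat ω d x hx, hI ω (Nat.zero_lt_of_lt s.2) x s hs.2⟩)
  have hsurj := graded_dichotomy F interp p hcompl hgs (fun c => p c ⊓ (I ⊔ p (c + 1)))
    (fun c => inf_le_left) (by
      intro ω d x s hx hs
      refine ⟨hcompat ω d x hx, ?_⟩
      obtain ⟨u, hu, w, hw, huw⟩ := Submodule.mem_sup.1 hs.2
      have hsplit : interp ω x =
          interp ω (Function.update x s u) + interp ω (Function.update x s w) := by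
        rw [← MultilinearMap.map_update_add, huw, Function.update_eq_self]
      rw [hsplit]
      refine Submodule.add_mem_sup (hI ω (Nat.zero_lt_of_lt s.2) _ s (by simpa using hu)) ?_
      -- replacing the entry of degree `d s` by one of degree `d s + 1` shifts the total degree
      have hdeg : ∑ i, Function.update d s (d s + 1) i = ∑ i, d i + 1 := by
        rw [Finset.sum_update_of_mem (Finset.mem_univ s),
          ← Finset.add_sum_erase _ d (Finset.mem_univ s), Finset.sdiff_singleton_eq_erase]
        ring
      rw [← hdeg]
      refine hcompat ω _ _ fun i => ?_
      by_cases his : i = s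
      · subst his
        simpa using hw
      · simpa [his] using hx i)
  have h11 : (1 : ZMod 2) + 1 = 0 := by decide
  simp only [zero_add, h11] at hinj hsurj
  have hinj' : p 0 ⊓ I = ⊥ ∧ p 1 ⊓ I = ⊥ := by
    refine hinj.resolve_right fun h => hIT (top_le_iff.1 ?_)
    rw [← hcompl.sup_eq_top]
    exact sup_le (inf_eq_left.1 h.1) (inf_eq_left.1 h.2)
  have hsurj' := hsurj.resolve_left fun h => hI0 <| (Submodule.eq_bot_iff I).2 fun u hu => by
    obtain ⟨a, ha, b, hb, hab⟩ :=
      Submodule.mem_sup.1 (hcompl.sup_eq_top ▸ Submodule.mem_top : u ∈ p 0 ⊔ p 1)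
    have ha0 : a ∈ p 0 ⊓ (I ⊔ p 1) :=
      ⟨ha, Submodule.mem_sup.2 ⟨u, hu, -b, neg_mem hb, by rw [← hab]; abel⟩⟩
    have hb0 : b ∈ p 1 ⊓ (I ⊔ p 0) :=
      ⟨hb, Submodule.mem_sup.2 ⟨u, hu, -a, neg_mem ha, by rw [← hab]; abel⟩⟩
    rw [h.1, Submodule.mem_bot] at ha0
    rw [h.2, Submodule.mem_bot] at hb0
    rw [← hab, ha0, hb0, add_zero]
  exact ⟨bijective_linearProj_restrict F _ _ I hcompl hinj'.2 (inf_eq_left.1 hsurj'.1),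
    bijective_linearProj_restrict F _ _ I hcompl.symm hinj'.1 (inf_eq_left.1 hsurj'.2)⟩
end
end

section
/- Let A = A⁰ ⊕ A¹ be a graded-simple ℤ₂-graded Ω-algebra over a field of characteristic ≠ 2 which is not simple, and let I be a proper nonzero ungraded ideal. For any multilinear polynomial f(x₁,…,x_m) and a₁,…,a_m ∈ I: (i) π₀(f(a₁,…,a_m)) = 2^{m−1} f(π_{i₁}(a₁),…,π_{i_m}(a_m)) for every tuple (i₁,…,i_m) ∈ {0,1}^m with an even number of 1's; (ii) π₁(f(a₁,…,a_m)) = 2^{m−1} f(π_{i₁}(a₁),…,π_{i_m}(a_m)) for every tuple with an odd number of 1's. -/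
/-!
Let `φ = π₀ - π₁` be the involutive automorphism attached to the grading. A subspace is graded
exactly when it is `φ`-stable (as `2` is invertible), so the proper ideal `I ∩ φ(I)` is graded,
and graded-simplicity forces `I ∩ φ(I) = 0`.

For `a ∈ I` one has `2 π_i(a) = a + (-1)^i φ(a)`, which is congruent to `a` modulo `φ(I)` and to
`(-1)^i φ(a)` modulo `I`. Terms respect congruences modulo ideals, so
`2^m f(π_{i₁}(a₁),…,π_{i_m}(a_m)) = f(2 π_{i₁}(a₁),…,2 π_{i_m}(a_m))` is congruent to `f(a)` modulo
`φ(I)` and to `(-1)^{∑ i} φ(f(a))` modulo `I`. When `m ≥ 1`, `f(a) ∈ I` and `φ(f(a)) ∈ φ(I)`, so the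
difference between this element and `f(a) + (-1)^{∑ i} φ(f(a)) = 2 π_{∑ i}(f(a))` lies in
`I ∩ φ(I) = 0`. Cancelling `2` gives the claim. When `m = 0`, `f` is a constant, hence fixed by `φ`.
No expansion of `f(a)` into homogeneous components is needed.
-/

open scoped TensorProduct

noncomputable section

universe u v

variable {O : Type u} {ar : O → ℕ}

variable (F : Type*) [Field F] {M : Type*} [AddCommGroup M] [Module F M]

section GradedOmega

/-! ### The grading automorphism -/

/-- The sign character `ZMod 2 → {1, -1} ⊆ F`. -/
def gradeSign (d : ZMod 2) : F := if d = 0 then 1 else -1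

lemma gradeSign_add (d e : ZMod 2) : gradeSign F (d + e) = gradeSign F d * gradeSign F e := by
  have h : ∀ d : ZMod 2, d = 0 ∨ d = 1 := by decide
  have h11 : (1 + 1 : ZMod 2) = 0 := by decide
  rcases h d with rfl | rfl <;> rcases h e with rfl | rfl <;> simp [gradeSign, h11]

lemma gradeSign_sum {ι : Type*} (s : Finset ι) (d : ι → ZMod 2) :
    gradeSign F (∑ i ∈ s, d i) = ∏ i ∈ s, gradeSign F (d i) := by
  classical
  induction s using Finset.induction_on with
  | empty => simp [gradeSign]
  | insert i s hi ih => rw [Finset.sum_insert hi, Finset.prod_insert hi, gradeSign_add, ih]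

variable {F}
variable {p : ZMod 2 → Submodule F M}

/-- The projection of `M` onto its component `p i`, as an endomorphism of `M`. -/
def gradeProj (hcompl : IsCompl (p 0) (p 1)) (i : ZMod 2) : M →ₗ[F] M :=
  if i = 0 then (p 0).projection (p 1) hcompl else (p 1).projection (p 0) hcompl.symm

/-- The grading automorphism: multiplication by `(-1)^d` on `p d`. -/
def gradeInv (hcompl : IsCompl (p 0) (p 1)) : M →ₗ[F] M :=
  ∑ d, gradeSign F d • gradeProj hcompl d

lemma gradeProj_mem (hcompl : IsCompl (p 0) (p 1)) (i : ZMod 2) (x : M) :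
    gradeProj hcompl i x ∈ p i := by
  have h : ∀ d : ZMod 2, d = 0 ∨ d = 1 := by decide
  rcases h i with rfl | rfl <;> simp [gradeProj]

lemma gradeProj_add (hcompl : IsCompl (p 0) (p 1)) (x : M) :
    gradeProj hcompl 0 x + gradeProj hcompl 1 x = x := by
  simpa [gradeProj] using Submodule.projection_add_projection_eq_self hcompl x

lemma gradeInv_apply (hcompl : IsCompl (p 0) (p 1)) (x : M) :
    gradeInv hcompl x = ∑ d, gradeSign F d • gradeProj hcompl d x := by
  simp [gradeInv]

lemma gradeInv_eq_sub (hcompl : IsCompl (p 0) (p 1)) (x : M) :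
    gradeInv hcompl x = gradeProj hcompl 0 x - gradeProj hcompl 1 x := by
  rw [gradeInv_apply]
  refine (Fin.sum_univ_two _).trans ?_
  change gradeSign F (0 : ZMod 2) • gradeProj hcompl 0 x
    + gradeSign F (1 : ZMod 2) • gradeProj hcompl 1 x = _
  simp [gradeSign, sub_eq_add_neg]

lemma gradeInv_of_mem (hcompl : IsCompl (p 0) (p 1)) (d : ZMod 2) {x : M} (hx : x ∈ p d) :
    gradeInv hcompl x = gradeSign F d • x := by
  have h : ∀ d : ZMod 2, d = 0 ∨ d = 1 := by decide
  rw [gradeInv_eq_sub]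
  rcases h d with rfl | rfl
  · have h0 : gradeProj hcompl 1 x = 0 := by
      simpa [gradeProj] using (Submodule.projection_apply_eq_zero_iff hcompl.symm).2 hx
    have := gradeProj_add hcompl x
    rw [h0, add_zero] at this
    simp [h0, this, gradeSign]
  · have h0 : gradeProj hcompl 0 x = 0 := by
      simpa [gradeProj] using (Submodule.projection_apply_eq_zero_iff hcompl).2 hx
    have := gradeProj_add hcompl x
    rw [h0, zero_add] at this
    simp [h0, this, gradeSign]

lemma gradeInv_gradeInv (hcompl : IsCompl (p 0) (p 1)) (x : M) :
    gradeInv hcompl (gradeInv hcompl x) = x := by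
  conv_rhs => rw [← gradeProj_add hcompl x]
  rw [gradeInv_eq_sub hcompl x, map_sub, gradeInv_of_mem hcompl 0 (gradeProj_mem hcompl 0 x),
    gradeInv_of_mem hcompl 1 (gradeProj_mem hcompl 1 x)]
  simp [gradeSign]

lemma two_smul_gradeProj (hcompl : IsCompl (p 0) (p 1)) (i : ZMod 2) (x : M) :
    (2 : F) • gradeProj hcompl i x = x + gradeSign F i • gradeInv hcompl x := by
  have h : ∀ d : ZMod 2, d = 0 ∨ d = 1 := by decide
  have hx := gradeProj_add hcompl x
  rw [gradeInv_eq_sub, two_smul]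
  nth_rewrite 3 [← hx]
  rcases h i with rfl | rfl <;> simp [gradeSign]
  abel

variable {interp : ∀ ω : O, MultilinearMap F (fun _ : Fin (ar ω) => M) M}

lemma gradeInv_interp (hcompl : IsCompl (p 0) (p 1)) (hcompat : OmegaGradedCompat F interp p)
    (ω : O) (x : Fin (ar ω) → M) :
    gradeInv hcompl (interp ω x) = interp ω (fun i => gradeInv hcompl (x i)) := by
  have hx : x = fun i => ∑ d : ZMod 2, gradeProj hcompl d (x i) := by
    funext i
    exact (gradeProj_add hcompl (x i)).symm.trans
      (Fin.sum_univ_two (fun d : Fin 2 => gradeProj (p := p) hcompl d (x i))).symm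
  have hy : (fun i => gradeInv hcompl (x i))
      = fun i => ∑ d : ZMod 2, gradeSign F d • gradeProj hcompl d (x i) :=
    funext fun i => gradeInv_apply hcompl (x i)
  rw [hy]
  conv_lhs => rw [hx]
  rw [MultilinearMap.map_sum, MultilinearMap.map_sum, map_sum]
  refine Finset.sum_congr rfl fun r _ => ?_
  rw [gradeInv_of_mem hcompl _ (hcompat ω r _ fun i => gradeProj_mem hcompl (r i) (x i)),
    gradeSign_sum]
  exact ((interp ω).map_smul_univ _ _).symm

lemma gradeInv_eval {X : Type*} (hcompl : IsCompl (p 0) (p 1))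
    (hcompat : OmegaGradedCompat F interp p) (t : OmegaTerm O ar X) (x : X → M) :
    gradeInv hcompl (t.eval F interp x) = t.eval F interp (fun j => gradeInv hcompl (x j)) := by
  induction t with
  | var y => rfl
  | op ω ts ih => simp only [OmegaTerm.eval, gradeInv_interp hcompl hcompat, ih]

/-! ### Terms, congruences modulo ideals, and homogeneity -/

/-- Operations respect congruence modulo an ideal; the entries are exchanged one at a time. -/
lemma OmegaIdeal.interp_sub_mem {J : Submodule F M} (hJ : OmegaIdeal F interp J) (ω : O)
    (x y : Fin (ar ω) → M) (h : ∀ i, x i - y i ∈ J) : interp ω x - interp ω y ∈ J := by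
  have key : ∀ s : Finset (Fin (ar ω)), interp ω (s.piecewise x y) - interp ω y ∈ J := by
    intro s
    induction s using Finset.induction_on with
    | empty => simp
    | insert i s hi ih =>
      have h1 : interp ω ((insert i s).piecewise x y) - interp ω (s.piecewise x y)
          = interp ω (Function.update (s.piecewise x y) i (x i - y i)) := by
        rw [MultilinearMap.map_update_sub, Finset.piecewise_insert]
        congr 2
        rw [eq_comm, Function.update_eq_self_iff, Finset.piecewise_eq_of_notMem _ _ _ hi]
      have h2 : interp ω (Function.update (s.piecewise x y) i (x i - y i)) ∈ J :=
        hJ ω i.pos _ i (by simpa using h i)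
      rw [← h1] at h2
      simpa using J.add_mem h2 ih
  simpa using key Finset.univ

lemma OmegaIdeal.eval_sub_mem {X : Type*} {J : Submodule F M} (hJ : OmegaIdeal F interp J)
    (t : OmegaTerm O ar X) (x y : X → M) (h : ∀ j, x j - y j ∈ J) :
    t.eval F interp x - t.eval F interp y ∈ J := by
  induction t with
  | var z => exact h z
  | op ω ts ih => exact hJ.interp_sub_mem ω _ _ ih

/-- A term is homogeneous in each variable, of degree the number of its occurrences. -/
lemma eval_smul (t : OmegaTerm O ar ℕ) (m : ℕ) (ht : ∀ j, m ≤ j → t.varCount j = 0)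
    (c : ℕ → F) (x : ℕ → M) :
    t.eval F interp (fun j => c j • x j)
      = (∏ j ∈ Finset.range m, c j ^ t.varCount j) • t.eval F interp x := by
  induction t with
  | var y =>
    have hy : y < m := by
      by_contra hlt
      simpa [OmegaTerm.varCount] using ht y (not_lt.1 hlt)
    simp [OmegaTerm.eval, OmegaTerm.varCount, pow_ite, hy]
  | op ω ts ih =>
    have ht' : ∀ i j, m ≤ j → (ts i).varCount j = 0 := by
      intro i j hj
      have := ht j hj
      simp only [OmegaTerm.varCount, Finset.sum_eq_zero_iff] at this
      exact this i (Finset.mem_univ i)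
    simp only [OmegaTerm.eval, OmegaTerm.varCount, ← Finset.prod_pow_eq_pow_sum]
    rw [Finset.prod_comm, ← MultilinearMap.map_smul_univ]
    exact congrArg _ (funext fun i => ih i (ht' i))

/-! ### The ideals `I` and `φ(I)` -/

/-- The image `φ(I)` of an ideal under the grading automorphism, written as a preimage since `φ`
is an involution, is an ideal. -/
lemma OmegaIdeal.comap_gradeInv (hcompl : IsCompl (p 0) (p 1))
    (hcompat : OmegaGradedCompat F interp p) {I : Submodule F M} (hI : OmegaIdeal F interp I) :
    OmegaIdeal F interp (I.comap (gradeInv hcompl)) := by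
  intro ω hω x s hs
  rw [Submodule.mem_comap, gradeInv_interp hcompl hcompat]
  exact hI ω hω _ s hs

/-- `I ∩ φ(I)` is a proper graded ideal, hence zero. -/
lemma inf_comap_gradeInv (h2 : (2 : F) ≠ 0) (hcompl : IsCompl (p 0) (p 1))
    (hcompat : OmegaGradedCompat F interp p) (hgs : OmegaGradedSimple F interp p)
    {I : Submodule F M} (hI : OmegaIdeal F interp I) (hIT : I ≠ ⊤) :
    I ⊓ I.comap (gradeInv hcompl) = ⊥ := by
  have hid : OmegaIdeal F interp (I ⊓ I.comap (gradeInv hcompl)) := fun ω hω x s hs =>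
    ⟨hI ω hω x s hs.1, hI.comap_gradeInv hcompl hcompat ω hω x s hs.2⟩
  have hgr : IsGradedSub F p (I ⊓ I.comap (gradeInv hcompl)) := by
    refine le_antisymm (sup_le inf_le_right inf_le_right) fun x hx => ?_
    have hproj : ∀ i, gradeProj hcompl i x ∈ p i ⊓ (I ⊓ I.comap (gradeInv hcompl)) := by
      intro i
      have hi : gradeProj hcompl i x ∈ I := by
        rw [← I.smul_mem_iff h2, two_smul_gradeProj]
        exact I.add_mem hx.1 (I.smul_mem _ hx.2)
      refine ⟨gradeProj_mem hcompl i x, hi, ?_⟩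
      rw [SetLike.mem_coe, Submodule.mem_comap, gradeInv_of_mem hcompl i (gradeProj_mem hcompl i x)]
      exact I.smul_mem _ hi
    rw [← gradeProj_add hcompl x]
    exact Submodule.add_mem_sup (hproj 0) (hproj 1)
  refine (hgs.2 _ hid hgr).resolve_right fun h => hIT ?_
  exact top_le_iff.1 (h ▸ inf_le_left)

/-- Both halves of the result at once, for valuations indexed by `ℕ`. -/
lemma gradeProj_eval (h2 : (2 : F) ≠ 0) (hcompl : IsCompl (p 0) (p 1))
    (hcompat : OmegaGradedCompat F interp p) (hgs : OmegaGradedSimple F interp p)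
    {I : Submodule F M} (hI : OmegaIdeal F interp I) (hIT : I ≠ ⊤)
    (m : ℕ) (t : OmegaTerm O ar ℕ) (hml : ∀ j : ℕ, t.varCount j = if j < m then 1 else 0)
    (a : ℕ → M) (ha : ∀ j, a j ∈ I) (d : ℕ → ZMod 2) :
    gradeProj hcompl (∑ j ∈ Finset.range m, d j) (t.eval F interp a)
      = (2 ^ (m - 1) : F) • t.eval F interp (fun j => gradeProj hcompl (d j) (a j)) := by
  have hscale : ∀ (c : ℕ → F) (x : ℕ → M), t.eval F interp (fun j => c j • x j)
      = (∏ j ∈ Finset.range m, c j) • t.eval F interp x := by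
    intro c x
    rw [eval_smul t m (fun j hj => by simp [hml, not_lt.2 hj])]
    congr 1
    refine Finset.prod_congr rfl fun j hj => ?_
    simp [hml, Finset.mem_range.1 hj]
  have hφ := gradeInv_eval hcompl hcompat t a
  rw [← (smul_right_injective M h2).eq_iff]
  rw [two_smul_gradeProj]
  rcases Nat.eq_zero_or_pos m with rfl | hm
    -- With no variables, the value is the same at every valuation.
  · have hconst : ∀ x : ℕ → M, t.eval F interp x = t.eval F interp (fun _ => 0) := by
      intro x
      simpa using (hscale (fun _ => 0) x).symm
    rw [hφ, hconst a, hconst fun j => gradeProj hcompl (d j) (a j),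
      hconst fun j => gradeInv hcompl (a j)]
    simp [gradeSign, two_smul]
  have hpow : (2 : F) * 2 ^ (m - 1) = ∏ j ∈ Finset.range m, 2 := by
    rw [Finset.prod_const, Finset.card_range, mul_pow_sub_one hm.ne']
  rw [smul_smul, hpow, ← hscale, gradeSign_sum, hφ, ← hscale, eq_comm, ← sub_eq_zero]
  simp only [two_smul_gradeProj]
  have hJ := hI.comap_gradeInv hcompl hcompat
  have hE : t.eval F interp a ∈ I := by
    have h0 : t.eval F interp (fun _ => 0) = 0 := by
      simpa [hm.ne'] using hscale (fun _ => 0) a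
    simpa [h0] using hI.eval_sub_mem t a (fun _ => 0) (by simpa using ha)
  have hE' : t.eval F interp (fun j => gradeSign F (d j) • gradeInv hcompl (a j))
      ∈ I.comap (gradeInv hcompl) := by
    rw [hscale, ← hφ]
    refine Submodule.smul_mem _ _ ?_
    rwa [Submodule.mem_comap, gradeInv_gradeInv]
  rw [← Submodule.mem_bot F, ← inf_comap_gradeInv h2 hcompl hcompat hgs hI hIT]
  constructor
  · rw [add_comm, ← sub_sub]
    exact I.sub_mem (hI.eval_sub_mem t _ _ fun j => by simpa using ha j) hE
  · rw [← sub_sub]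
    refine Submodule.sub_mem _ (hJ.eval_sub_mem t _ _ fun j => ?_) hE'
    rw [add_sub_cancel_left]
    refine Submodule.smul_mem _ _ ?_
    rw [Submodule.mem_comap, gradeInv_gradeInv]
    exact ha j

end GradedOmega

/-- with `A` graded-simple but not simple over a field of characteristic
`≠ 2`, `I` a proper nonzero ungraded ideal, `f` multilinear in `m` variables and
`a₁,…,a_m ∈ I`:
(i) `π₀(f(a₁,…,a_m)) = 2^{m-1} f(π_{i₁}(a₁),…,π_{i_m}(a_m))` for every tuple
`(i₁,…,i_m) ∈ {0,1}^m` with an even number of `1`'s, and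
(ii) `π₁(f(a₁,…,a_m)) = 2^{m-1} f(π_{i₁}(a₁),…,π_{i_m}(a_m))` for every tuple with an
odd number of `1`'s. -/
theorem proj_of_multilinear_eval (h2 : (2 : F) ≠ 0)
    (interp : ∀ ω : O, MultilinearMap F (fun _ : Fin (ar ω) => M) M)
    (p : ZMod 2 → Submodule F M) (hcompl : IsCompl (p 0) (p 1))
    (hcompat : OmegaGradedCompat F interp p)
    (hgs : OmegaGradedSimple F interp p) (hns : ¬ OmegaSimple F interp)
    (I : Submodule F M) (hI : OmegaIdeal F interp I) (hI0 : I ≠ ⊥) (hIT : I ≠ ⊤)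
    (m : ℕ) (t : OmegaTerm O ar ℕ)
    (hml : ∀ j : ℕ, t.varCount j = if j < m then 1 else 0)
    (a : Fin m → M) (ha : ∀ j, a j ∈ I) :
    letI π : ZMod 2 → M →ₗ[F] M := fun i =>
      if i = 0 then (p 0).subtype ∘ₗ Submodule.linearProjOfIsCompl (p 0) (p 1) hcompl
      else (p 1).subtype ∘ₗ Submodule.linearProjOfIsCompl (p 1) (p 0) hcompl.symm
    letI fval : M := t.eval F interp (fun j => if h : j < m then a ⟨j, h⟩ else 0)
    (∀ iv : Fin m → ZMod 2, (∑ j, iv j) = 0 →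
      π 0 fval = (2 ^ (m - 1) : F) •
        t.eval F interp (fun j => if h : j < m then π (iv ⟨j, h⟩) (a ⟨j, h⟩) else 0)) ∧
    (∀ iv : Fin m → ZMod 2, (∑ j, iv j) = 1 →
      π 1 fval = (2 ^ (m - 1) : F) •
        t.eval F interp (fun j => if h : j < m then π (iv ⟨j, h⟩) (a ⟨j, h⟩) else 0)) := by
  have ha' : ∀ j : ℕ, (if h : j < m then a ⟨j, h⟩ else 0) ∈ I := by
    intro j
    split_ifs
    · exact ha _
    · exact I.zero_mem
  have key : ∀ iv : Fin m → ZMod 2,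
      gradeProj hcompl (∑ j, iv j)
          (t.eval F interp (fun j => if h : j < m then a ⟨j, h⟩ else 0))
        = (2 ^ (m - 1) : F) • t.eval F interp
            (fun j => if h : j < m then gradeProj hcompl (iv ⟨j, h⟩) (a ⟨j, h⟩) else 0) := by
    intro iv
    have h := gradeProj_eval h2 hcompl hcompat hgs hI hIT m t hml _ ha'
      (fun j => if h : j < m then iv ⟨j, h⟩ else 0)
    rw [← Fin.sum_univ_eq_sum_range] at h
    simp only [Fin.is_lt, dite_true, Fin.eta] at h
    rw [h]
    congr 2
    funext j
    split_ifs <;> simp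
  exact ⟨fun iv hiv => (congrArg (gradeProj hcompl · _) hiv).symm.trans (key iv),
    fun iv hiv => (congrArg (gradeProj hcompl · _) hiv).symm.trans (key iv)⟩
end
end
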